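/- Let N ≥ 1 be an integer and s ∈ ℂ with Re(s) > -1/2. Then the function sending an N×N complex Hermitian matrix H to ∏_{j=1}^N (1+λ_j(H)²)^{-Re(s)-N} · exp(2·Im(s)·arctan(λ_j(H))), where λ_1(H),…,λ_N(H) are the eigenvalues of H, is integrable with respect to Lebesgue (additive Haar) measure on the real vector space of N×N Hermitian matrices. (Hence the Hua–Pickrell measure M_HP^{s,N} can be normalized to a probability measure.) -/

import Mathlib

/-! The arctangent is bounded, so the density is at most a constant times
`∏ (1 + λ_j²)^(-a) = |det (1 + iH)|^(-2a)` with `a = Re s + N > N - 1/2`; measurability comes from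
`measurable_sum_eigenvalues`. Finiteness of the integral of `|det (1 + iH)|^(-2a)` over the space of
Hermitian matrices for `a > N - 1/2` is proved by induction on `N`, following Hua, without the Weyl
integration formula.

Write a Hermitian matrix of size `N + 1` as `[[A, v], [v*, t]]` and substitute `v = (1 + iA) w`. By
the Schur complement (`norm_sq_det_border`),
`|det (1 + iH)|² = |det (1 + iA)|² ((1 + |w|²)² + (t - ⟨w, A w⟩)²)`,
and the substitution has real Jacobian `|det (1 + iA)|²` (`lintegral_mulVec`). After a translation
in `t`, the integral over `(w, t)` is bounded independently of `A`, and what remains is the integral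
of `|det (1 + iA)|^(-2(a - 1))`, which is the case `N` with exponent `a - 1 > N - 1/2`
(`lintegral_weight_border`). -/

open MeasureTheory

/-- The eigenvalues of a self-adjoint (Hermitian) complex matrix, as real numbers. -/
noncomputable def hermitianEigenvalues {N : ℕ} (H : selfAdjoint (Matrix (Fin N) (Fin N) ℂ)) :
    Fin N → ℝ :=
  Matrix.IsHermitian.eigenvalues (show (H : Matrix (Fin N) (Fin N) ℂ).IsHermitian from H.2)

namespace HuaPickrell

/-- The real vector space of `N × N` complex Hermitian matrices. -/
abbrev Herm (N : ℕ) := selfAdjoint (Matrix (Fin N) (Fin N) ℂ)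

/-! ### Topology of the space of Hermitian matrices -/

lemma herm_isClosedEmbedding (N : ℕ) :
    Topology.IsClosedEmbedding (Subtype.val : Herm N → Matrix (Fin N) (Fin N) ℂ) := by
  apply IsClosed.isClosedEmbedding_subtypeVal
  have : IsClosed {M : Matrix (Fin N) (Fin N) ℂ | star M = M} :=
    isClosed_eq continuous_star continuous_id
  exact this

instance (N : ℕ) : LocallyCompactSpace (Herm N) :=
  haveI : LocallyCompactSpace (Matrix (Fin N) (Fin N) ℂ) :=
    inferInstanceAs (LocallyCompactSpace (Fin N → Fin N → ℂ))
  (herm_isClosedEmbedding N).locallyCompactSpace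

instance (N : ℕ) : SecondCountableTopology (Herm N) :=
  haveI : SecondCountableTopology (Matrix (Fin N) (Fin N) ℂ) :=
    inferInstanceAs (SecondCountableTopology (Fin N → Fin N → ℂ))
  (herm_isClosedEmbedding N).isEmbedding.secondCountableTopology

/-! ### Spectral functions -/

lemma trace_pow_eq {N : ℕ} (H : Herm N) (k : ℕ) :
    ((H : Matrix (Fin N) (Fin N) ℂ) ^ k).trace = ∑ j, (hermitianEigenvalues H j : ℂ) ^ k := by
  have hH : (H : Matrix (Fin N) (Fin N) ℂ).IsHermitian := H.2
  rw [hH.spectral_theorem, ← map_pow, Unitary.conjStarAlgAut_apply, Matrix.trace_mul_comm,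
    ← mul_assoc, Unitary.coe_star_mul_self, one_mul, Matrix.diagonal_pow, Matrix.trace_diagonal]
  rfl

lemma det_one_add_I_smul {N : ℕ} (H : Herm N) :
    (1 + Complex.I • (H : Matrix (Fin N) (Fin N) ℂ)).det =
      ∏ j, (1 + Complex.I * (hermitianEigenvalues H j : ℂ)) := by
  have hH : (H : Matrix (Fin N) (Fin N) ℂ).IsHermitian := H.2
  rw [hH.spectral_theorem, ← map_smul, ← map_one (Unitary.conjStarAlgAut ℂ _ hH.eigenvectorUnitary),
    ← map_add, Unitary.conjStarAlgAut_apply, Matrix.det_mul_comm,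
    ← mul_assoc, Unitary.coe_star_mul_self, one_mul, ← Matrix.diagonal_smul,
    ← Matrix.diagonal_one, Matrix.diagonal_add, Matrix.det_diagonal]
  rfl

lemma norm_sq_det {N : ℕ} (H : Herm N) :
    ‖(1 + Complex.I • (H : Matrix (Fin N) (Fin N) ℂ)).det‖ ^ 2 =
      ∏ j, (1 + hermitianEigenvalues H j ^ 2) := by
  rw [det_one_add_I_smul, norm_prod, ← Finset.prod_pow]
  refine Finset.prod_congr rfl fun j _ => ?_
  rw [Complex.sq_norm, Complex.normSq_apply]
  simp
  ring

lemma norm_det_pos {N : ℕ} (H : Herm N) :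
    0 < ‖(1 + Complex.I • (H : Matrix (Fin N) (Fin N) ℂ)).det‖ := by
  have h : 0 < ‖(1 + Complex.I • (H : Matrix (Fin N) (Fin N) ℂ)).det‖ ^ 2 := by
    rw [norm_sq_det]; exact Finset.prod_pos fun j _ => by positivity
  exact (norm_nonneg _).lt_of_ne' fun h0 => by simp [h0] at h

/-- Linear statistics of the eigenvalues are measurable. For a polynomial `g` the sum is a linear
combination of the traces of powers of `H`, hence continuous; a general continuous `g` is a locally
uniform limit of polynomials by Weierstrass, so the sum is a pointwise limit of continuous
functions. -/
lemma measurable_sum_eigenvalues {N : ℕ} [MeasurableSpace (Herm N)] [BorelSpace (Herm N)]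
    {g : ℝ → ℝ} (hg : Continuous g) :
    Measurable fun H : Herm N => ∑ j, g (hermitianEigenvalues H j) := by
  choose p hp using fun n : ℕ => exists_polynomial_near_of_continuousOn (-(n : ℝ)) n g
    hg.continuousOn (1 / ((n : ℝ) + 1)) (by positivity)
  refine measurable_of_tendsto_metrizable
    (f := fun n (H : Herm N) => ∑ j, (p n).eval (hermitianEigenvalues H j)) (fun n => ?_) ?_
  · have h : (fun H : Herm N => ∑ j, (p n).eval (hermitianEigenvalues H j)) =
        fun H : Herm N => ∑ k ∈ (p n).support,
          (p n).coeff k * ((H : Matrix (Fin N) (Fin N) ℂ) ^ k).trace.re := by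
      funext H
      simp_rw [Polynomial.eval_eq_sum, Polynomial.sum_def]
      rw [Finset.sum_comm]
      refine Finset.sum_congr rfl fun k _ => ?_
      rw [trace_pow_eq, ← Finset.mul_sum]
      norm_cast
    rw [h]
    refine Continuous.measurable (continuous_finsetSum _ fun k _ => ?_)
    exact continuous_const.mul (Complex.continuous_re.comp
      ((continuous_subtype_val.pow k).matrix_trace))
  · rw [tendsto_pi_nhds]
    intro H
    refine tendsto_finsetSum _ fun j _ => ?_
    rw [tendsto_iff_dist_tendsto_zero]
    refine squeeze_zero' (Filter.Eventually.of_forall fun _ => dist_nonneg) ?_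
      tendsto_one_div_add_atTop_nhds_zero_nat
    filter_upwards [Filter.eventually_ge_atTop ⌈|hermitianEigenvalues H j|⌉₊] with n hn
    exact (hp n _ (Set.mem_Icc.2 (abs_le.1 (Nat.ceil_le.1 hn)))).le

/-! ### Bordered Hermitian matrices -/

/-- The bordering isomorphism sending `(A, v, t)` to the Hermitian matrix with block form
`[[A, v], [v*, t]]`; the last index of `Fin (N + 1)` carries the border. -/
noncomputable def border (N : ℕ) : (Herm N × (Fin N → ℂ) × ℝ) ≃ₜ+ Herm (N + 1) where
  toFun x := ⟨(Matrix.fromBlocks (x.1 : Matrix (Fin N) (Fin N) ℂ) (Matrix.of fun i (_ : Fin 1) => x.2.1 i)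
      (Matrix.of fun (_ : Fin 1) i => star (x.2.1 i)) (Matrix.of fun _ _ => (x.2.2 : ℂ))).submatrix
      finSumFinEquiv.symm finSumFinEquiv.symm, by
    have hx : (x.1 : Matrix (Fin N) (Fin N) ℂ).IsHermitian := x.1.2
    refine Matrix.IsHermitian.submatrix (Matrix.IsHermitian.fromBlocks hx ?_ ?_) _
    · ext i j; simp
    · ext i j; simp⟩
  invFun H := (⟨(H : Matrix (Fin (N + 1)) (Fin (N + 1)) ℂ).submatrix (Fin.castAdd 1) (Fin.castAdd 1),
      Matrix.IsHermitian.submatrix H.2 _⟩,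
    fun i => (H : Matrix (Fin (N + 1)) (Fin (N + 1)) ℂ) (Fin.castAdd 1 i) (Fin.last N),
    ((H : Matrix (Fin (N + 1)) (Fin (N + 1)) ℂ) (Fin.last N) (Fin.last N)).re)
  left_inv x := by
    have h1 : Fin.last N = Fin.natAdd N (0 : Fin 1) := rfl
    refine Prod.ext (Subtype.ext ?_) (Prod.ext ?_ ?_)
    · ext i j
      simp only [Matrix.submatrix_apply, finSumFinEquiv_symm_apply_castAdd, Matrix.fromBlocks_apply₁₁]
    · ext i
      simp only [Matrix.submatrix_apply, h1, finSumFinEquiv_symm_apply_castAdd,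
        finSumFinEquiv_symm_apply_natAdd, Matrix.fromBlocks_apply₁₂, Matrix.of_apply]
    · simp only [Matrix.submatrix_apply, h1, 
        finSumFinEquiv_symm_apply_natAdd, Matrix.fromBlocks_apply₂₂, Matrix.of_apply, Complex.ofReal_re]
  right_inv H := by
    have h1 : Fin.last N = Fin.natAdd N (0 : Fin 1) := rfl
    have hH : (H : Matrix (Fin (N + 1)) (Fin (N + 1)) ℂ).IsHermitian := H.2
    apply Subtype.ext
    ext i j
    obtain ⟨i, rfl⟩ := finSumFinEquiv.surjective i
    obtain ⟨j, rfl⟩ := finSumFinEquiv.surjective j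
    rcases i with i | i <;> rcases j with j | j
    · simp
    · obtain rfl := Subsingleton.elim j 0
      simp [h1]
    · obtain rfl := Subsingleton.elim i 0
      simpa [h1] using hH.apply _ _
    · obtain rfl := Subsingleton.elim j 0
      obtain rfl := Subsingleton.elim i 0
      simpa [h1] using hH.coe_re_apply_self _
  map_add' x y := by
    apply Subtype.ext
    ext i j
    obtain ⟨i, rfl⟩ := finSumFinEquiv.surjective i
    obtain ⟨j, rfl⟩ := finSumFinEquiv.surjective j
    rcases i with i | i <;> rcases j with j | j <;> simp
  continuous_toFun := by
    refine Continuous.subtype_mk (Continuous.matrix_submatrix (Continuous.matrix_fromBlocks ?_ ?_ ?_ ?_) _ _) _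
    · fun_prop
    · exact continuous_matrix fun i j => by simp only [Matrix.of_apply]; fun_prop
    · exact continuous_matrix fun i j => by simp only [Matrix.of_apply]; fun_prop
    · exact continuous_matrix fun i j => by simp only [Matrix.of_apply]; fun_prop
  continuous_invFun := by
    have h : Continuous (Subtype.val : Herm (N + 1) → _) := continuous_subtype_val
    refine (Continuous.subtype_mk (h.matrix_submatrix _ _) _).prodMk (Continuous.prodMk ?_ ?_)
    · exact continuous_pi fun i => h.matrix_elem _ _
    · exact Complex.continuous_re.comp (h.matrix_elem _ _)

/-- The Schur complement formula with the border column written as `v = (1 + iA) w`. The complement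
is `1 + it + v* w`, and `v* w = |w|² - i ⟨w, A w⟩` with `⟨w, A w⟩` real, so that its real part is
`1 + |w|²` and its imaginary part is `t - ⟨w, A w⟩`. -/
lemma norm_sq_det_border {N : ℕ} (A : Herm N) (w : Fin N → ℂ) (t : ℝ) :
    ‖(1 + Complex.I • (border N (A, (1 + Complex.I • (A : Matrix (Fin N) (Fin N) ℂ)).mulVec w, t) :
        Matrix (Fin (N + 1)) (Fin (N + 1)) ℂ)).det‖ ^ 2 =
      ‖(1 + Complex.I • (A : Matrix (Fin N) (Fin N) ℂ)).det‖ ^ 2 *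
        ((1 + ∑ i, ‖w i‖ ^ 2) ^ 2 +
          (t - (star w ⬝ᵥ (A : Matrix (Fin N) (Fin N) ℂ).mulVec w).re) ^ 2) := by
  have hA : (A : Matrix (Fin N) (Fin N) ℂ).IsHermitian := A.2
  set M : Matrix (Fin N) (Fin N) ℂ := A.1 with hM
  set P := 1 + Complex.I • M with hP
  have hdet : IsUnit P.det := isUnit_iff_ne_zero.2 (norm_pos_iff.1 (norm_det_pos A))
  let _ : Invertible P := P.invertibleOfIsUnitDet hdet
  have hne : ∀ (i : Fin N) (j : Fin 1), Fin.castAdd 1 i ≠ Fin.natAdd N j := fun i j h => by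
    have h' := congrArg Fin.val h
    simp only [Fin.val_castAdd, Fin.val_natAdd] at h'
    omega
  have h1 : 1 + Complex.I • (border N (A, P.mulVec w, t) :
        Matrix (Fin (N + 1)) (Fin (N + 1)) ℂ) =
      (Matrix.fromBlocks P (P * Matrix.of fun i (_ : Fin 1) => Complex.I * w i)
        (Matrix.of fun (_ : Fin 1) i => Complex.I * star (P.mulVec w i))
        (Matrix.of fun _ _ => 1 + Complex.I * t)).submatrix
        finSumFinEquiv.symm finSumFinEquiv.symm := by
    ext i j
    obtain ⟨i, rfl⟩ := finSumFinEquiv.surjective i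
    obtain ⟨j, rfl⟩ := finSumFinEquiv.surjective j
    rcases i with i | i <;> rcases j with j | j
    · simp [border, hP, Matrix.one_apply, hM]
    · simp [border, hne, Matrix.mul_apply, Matrix.mulVec, dotProduct,
        Finset.mul_sum, mul_left_comm]
    · simp [border, (hne _ _).symm]
    · simp [border, Subsingleton.elim i j]
  have hc : star (M.mulVec w) ⬝ᵥ w = ((star w ⬝ᵥ M.mulVec w).re : ℂ) := by
    have him := hA.im_star_dotProduct_mulVec_self w
    rw [Matrix.star_mulVec, hA.eq, ← Matrix.dotProduct_mulVec]
    exact Complex.ext rfl (by simpa using him)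
  have hw : star w ⬝ᵥ w = ((∑ i, ‖w i‖ ^ 2 : ℝ) : ℂ) := by
    simp [dotProduct, Complex.conj_mul']
  have hvw : star (P.mulVec w) ⬝ᵥ w =
      ((∑ i, ‖w i‖ ^ 2 : ℝ) : ℂ) - Complex.I * ((star w ⬝ᵥ M.mulVec w).re : ℂ) := by
    rw [hP, Matrix.add_mulVec, Matrix.one_mulVec, Matrix.smul_mulVec, star_add, star_smul,
      add_dotProduct, smul_dotProduct, hc, hw]
    simp [sub_eq_add_neg]
  rw [h1, Matrix.det_submatrix_equiv_self, Matrix.det_fromBlocks₁₁, norm_mul, mul_pow,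
    Matrix.mul_assoc, Matrix.invOf_mul_cancel_left]
  congr 1
  have h2 : (Matrix.of (fun (_ _ : Fin 1) => 1 + Complex.I * (t : ℂ)) -
      (Matrix.of fun (_ : Fin 1) i => Complex.I * star (P.mulVec w i)) *
        Matrix.of fun i (_ : Fin 1) => Complex.I * w i).det =
      ((1 + ∑ i, ‖w i‖ ^ 2 : ℝ) : ℂ) +
        ((t - (star w ⬝ᵥ M.mulVec w).re : ℝ) : ℂ) * Complex.I := by
    have h3 : ∑ i, (Complex.I * star (P.mulVec w i)) * (Complex.I * w i) =
        - (star (P.mulVec w) ⬝ᵥ w) := by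
      rw [dotProduct, ← Finset.sum_neg_distrib]
      refine Finset.sum_congr rfl fun i _ => ?_
      rw [Pi.star_apply]
      linear_combination (star (P.mulVec w i) * w i) * Complex.I_mul_I
    rw [Matrix.det_fin_one, Matrix.sub_apply, Matrix.mul_apply]
    simp only [Matrix.of_apply]
    rw [h3, hvw]
    push_cast
    ring
  rw [h2, Complex.sq_norm, Complex.normSq_add_mul_I]

/-! ### Integrating out the border -/

/-- Linear change of variables on `ℂ^N`: a complex matrix `P` has real Jacobian `|det P|²`. -/
lemma lintegral_mulVec {N : ℕ} (P : Matrix (Fin N) (Fin N) ℂ) (hP : P.det ≠ 0)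
    {f : (Fin N → ℂ) → ENNReal} (hf : Measurable f) :
    ∫⁻ v, f v = ENNReal.ofReal (‖P.det‖ ^ 2) * ∫⁻ w, f (P.mulVec w) := by
  have hd : LinearMap.det ((Matrix.toLin' P).restrictScalars ℝ) = ‖P.det‖ ^ 2 := by
    rw [LinearMap.det_restrictScalars, LinearMap.det_toLin', Algebra.norm_complex_apply,
      Complex.sq_norm]
  have hpos : 0 < ‖P.det‖ ^ 2 := by have := norm_pos_iff.2 hP; positivity
  have h := Measure.map_linearMap_addHaar_eq_smul_addHaar (volume : Measure (Fin N → ℂ))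
    (f := (Matrix.toLin' P).restrictScalars ℝ) (by rw [hd]; exact hpos.ne')
  rw [hd, abs_of_pos (by positivity)] at h
  have hm : Measurable ((Matrix.toLin' P).restrictScalars ℝ) :=
    (LinearMap.continuous_of_finiteDimensional _).measurable
  have h2 : ∫⁻ w, f (P.mulVec w) = ENNReal.ofReal (‖P.det‖ ^ 2)⁻¹ * ∫⁻ v, f v := by
    rw [← smul_eq_mul, ← lintegral_smul_measure, ← h, lintegral_map hf hm]
    rfl
  rw [h2, ← mul_assoc, ← ENNReal.ofReal_mul hpos.le, mul_inv_cancel₀ hpos.ne',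
    ENNReal.ofReal_one, one_mul]

/-- Splitting the exponent `a = (a - a') + a'` bounds the weight of the Schur complement by a product
of a function of the border column and a function of the corner entry. -/
lemma rpow_neg_le {b₀ b τ a a' : ℝ} (h1 : 1 ≤ b₀) (hb : b₀ ≤ b) (ha' : 0 ≤ a') (ha : a' ≤ a) :
    (b ^ 2 + τ ^ 2) ^ (-a) ≤ b₀ ^ (-(2 * (a - a'))) * (1 + τ ^ 2) ^ (-a') := by
  have hX : 0 < b ^ 2 + τ ^ 2 := by nlinarith [sq_nonneg τ]
  have e1 : (b ^ 2 + τ ^ 2) ^ (-a) = (b ^ 2 + τ ^ 2) ^ (-(a - a')) * (b ^ 2 + τ ^ 2) ^ (-a') := by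
    rw [← Real.rpow_add hX]; congr 1; ring
  have e2 : b₀ ^ (-(2 * (a - a'))) = (b₀ ^ 2) ^ (-(a - a')) := by
    rw [← Real.rpow_natCast, ← Real.rpow_mul (by linarith)]; congr 1; push_cast; ring
  rw [e1, e2]
  gcongr ?_ * ?_
  · exact Real.rpow_le_rpow_of_nonpos (by positivity) (by nlinarith [sq_nonneg τ]) (by linarith)
  · exact Real.rpow_le_rpow_of_nonpos (by positivity) (by nlinarith [sq_nonneg τ]) (by linarith)

lemma continuous_norm_sq_det (N : ℕ) : Continuous fun H : Herm N =>
    ‖(1 + Complex.I • (H : Matrix (Fin N) (Fin N) ℂ)).det‖ ^ 2 := by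
  have h : Continuous (Subtype.val : Herm N → Matrix (Fin N) (Fin N) ℂ) := continuous_subtype_val
  have h2 : Continuous fun H : Herm N => 1 + Complex.I • (H : Matrix (Fin N) (Fin N) ℂ) :=
    continuous_const.add (h.const_smul Complex.I)
  have h3 : Continuous fun H : Herm N => (1 + Complex.I • (H : Matrix (Fin N) (Fin N) ℂ)).det :=
    h2.matrix_det
  exact h3.norm.pow 2

/-- The weight `|det (1 + iH)|^(-2a) = det (1 + H²)^(-a)`, as an extended nonnegative real. -/
noncomputable def weight (N : ℕ) (a : ℝ) (H : Herm N) : ENNReal :=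
  ENNReal.ofReal ((‖(1 + Complex.I • (H : Matrix (Fin N) (Fin N) ℂ)).det‖ ^ 2) ^ (-a))

lemma measurable_weight (N : ℕ) (a : ℝ) [MeasurableSpace (Herm N)] [BorelSpace (Herm N)] :
    Measurable (weight N a) :=
  ((continuous_norm_sq_det N).measurable.pow_const _).ennreal_ofReal

/-- Integrating the weight over the border column and the corner entry lowers both the dimension and
the exponent by one, up to a finite constant. -/
lemma lintegral_weight_border {N : ℕ} {a : ℝ} (ha : (N : ℝ) + 1 / 2 < a) :
    ∃ K : ENNReal, K ≠ ⊤ ∧ ∀ A : Herm N,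
      ∫⁻ v, ∫⁻ t, weight (N + 1) a (border N (A, v, t)) ≤ K * weight N (a - 1) A := by
  -- The value `a' > 1/2` makes the integral over the corner converge, while `4 (a - a') > 2 N` makes the
  -- integral over the column in `ℂ^N` converge; the midpoint of `1/2` and `a - N` meets both.
  set a' : ℝ := (1 / 2 + a - N) / 2 with ha'
  have h1 : 1 / 2 < a' := by rw [ha']; linarith
  have hN0 : (0 : ℝ) ≤ N := N.cast_nonneg
  have h2 : a' ≤ a := by rw [ha']; linarith
  have hk : Integrable (fun t : ℝ => (1 + t ^ 2) ^ (-a')) := by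
    have := integrable_rpow_neg_one_add_norm_sq (E := ℝ) (μ := volume) (r := 2 * a')
      (by simp; linarith)
    simpa [neg_div] using this
  have hh : Integrable (fun w : Fin N → ℂ => (1 + ‖w‖ ^ 2) ^ (-(2 * (a - a')))) := by
    have hfr : (Module.finrank ℝ (Fin N → ℂ) : ℝ) = N * 2 := by
      simp [Module.finrank_pi_fintype, Complex.finrank_real_complex]
    have := integrable_rpow_neg_one_add_norm_sq (E := Fin N → ℂ) (μ := volume)
      (r := 2 * (2 * (a - a'))) (by rw [hfr, ha']; linarith)
    convert this using 3
    ring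
  set k : ℝ → ENNReal := fun t => ENNReal.ofReal ((1 + t ^ 2) ^ (-a')) with hkdef
  set h : (Fin N → ℂ) → ENNReal := fun w => ENNReal.ofReal ((1 + ‖w‖ ^ 2) ^ (-(2 * (a - a'))))
    with hhdef
  have hkm : Measurable k := by fun_prop
  have hhm : Measurable h := by fun_prop
  refine ⟨(∫⁻ w, h w) * ∫⁻ t, k t, ENNReal.mul_ne_top ?_ ?_, fun A => ?_⟩
  · exact hh.lintegral_lt_top.ne
  · exact hk.lintegral_lt_top.ne
  set P := 1 + Complex.I • (A : Matrix (Fin N) (Fin N) ℂ) with hP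
  let _ : MeasurableSpace (Herm (N + 1)) := borel _
  have : BorelSpace (Herm (N + 1)) := ⟨rfl⟩
  have hPd : 0 < ‖P.det‖ := norm_det_pos A
  have hF : Measurable fun x : (Fin N → ℂ) × ℝ => weight (N + 1) a (border N (A, x)) :=
    (measurable_weight _ _).comp (((border N).continuous.comp
      (continuous_const.prodMk continuous_id)).measurable)
  rw [lintegral_mulVec P (norm_pos_iff.1 hPd) hF.lintegral_prod_right']
  have key : ∀ w, ∫⁻ t, weight (N + 1) a (border N (A, P.mulVec w, t)) ≤
      (ENNReal.ofReal ((‖P.det‖ ^ 2) ^ (-a)) * ∫⁻ t, k t) * h w := by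
    intro w
    set c := (star w ⬝ᵥ (A : Matrix (Fin N) (Fin N) ℂ).mulVec w).re with hc
    calc ∫⁻ t, weight (N + 1) a (border N (A, P.mulVec w, t))
        ≤ ∫⁻ t, (ENNReal.ofReal ((‖P.det‖ ^ 2) ^ (-a)) * h w) * k (t - c) := by
          refine lintegral_mono fun t => ?_
          simp only [weight, hkdef, hhdef]
          rw [norm_sq_det_border, Real.mul_rpow (by positivity) (by positivity), mul_assoc,
            ← ENNReal.ofReal_mul (by positivity), ← ENNReal.ofReal_mul (by positivity)]
          refine ENNReal.ofReal_le_ofReal (mul_le_mul_of_nonneg_left ?_ (by positivity))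
          refine rpow_neg_le (by nlinarith [sq_nonneg ‖w‖]) ?_ (by linarith) h2
          gcongr
          have hsum : ‖w‖ ≤ √(∑ i, ‖w i‖ ^ 2) := by
            refine (pi_norm_le_iff_of_nonneg (Real.sqrt_nonneg _)).2 fun i => ?_
            exact Real.le_sqrt_of_sq_le (Finset.single_le_sum (f := fun i => ‖w i‖ ^ 2)
              (fun i _ => by positivity) (Finset.mem_univ i))
          exact (Real.le_sqrt (norm_nonneg _) (by positivity)).1 hsum
      _ = (ENNReal.ofReal ((‖P.det‖ ^ 2) ^ (-a)) * ∫⁻ t, k t) * h w := by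
          rw [lintegral_const_mul _ (by fun_prop : Measurable fun t => k (t - c)),
            lintegral_sub_right_eq_self k c]
          ring
  calc _ ≤ ENNReal.ofReal (‖P.det‖ ^ 2) *
        ∫⁻ w, (ENNReal.ofReal ((‖P.det‖ ^ 2) ^ (-a)) * ∫⁻ t, k t) * h w := by
        gcongr with w; exact key w
    _ = ((∫⁻ w, h w) * ∫⁻ t, k t) *
        (ENNReal.ofReal (‖P.det‖ ^ 2) * ENNReal.ofReal ((‖P.det‖ ^ 2) ^ (-a))) := by
        rw [lintegral_const_mul _ hhm]; ring
    _ = _ := by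
        rw [← ENNReal.ofReal_mul (by positivity), weight]
        congr 2
        rw [show -(a - 1) = 1 + -a by ring, Real.rpow_add (by positivity), Real.rpow_one]

/-- For `a > N - 1/2` the weight has finite integral against every additive Haar measure. The
statement quantifies over the measure so that the induction may use any Haar measure in each
dimension. -/
lemma lintegral_weight_lt_top (N : ℕ) : ∀ a : ℝ, (N : ℝ) - 1 / 2 < a →
    ∀ [MeasurableSpace (Herm N)] [BorelSpace (Herm N)] (μ : Measure (Herm N))
      [μ.IsAddHaarMeasure], ∫⁻ H, weight N a H ∂μ < ⊤ := by
  induction N with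
  | zero =>
    intro a _ _ _ μ _
    have h : ∀ H : Herm 0, weight 0 a H = 1 := fun H => by simp [weight]
    simp_rw [h, lintegral_const, one_mul]
    have : Subsingleton (Herm 0) := ⟨fun x y => Subtype.ext (Subsingleton.elim _ _)⟩
    exact (Set.subsingleton_univ.finite.isCompact).measure_lt_top
  | succ N ih =>
    intro a ha _ _ μ _
    let _ : MeasurableSpace (Herm N) := borel _
    have : BorelSpace (Herm N) := ⟨rfl⟩
    let ν : Measure (Herm N) := Measure.addHaar
    let ρ : Measure (Herm N × (Fin N → ℂ) × ℝ) := ν.prod (volume.prod volume)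
    have i1 : (volume.prod volume : Measure ((Fin N → ℂ) × ℝ)).IsAddHaarMeasure :=
      Measure.prod.instIsAddHaarMeasure _ _
    have i2 : SFinite ν := inferInstance
    have i3 : SFinite (volume.prod volume : Measure ((Fin N → ℂ) × ℝ)) := inferInstance
    have : ρ.IsAddHaarMeasure := Measure.prod.instIsAddHaarMeasure _ _
    have : (Measure.map (border N) ρ).IsAddHaarMeasure :=
      ContinuousAddEquiv.isAddHaarMeasure_map ρ (border N)
    obtain ⟨K, hK, hle⟩ := lintegral_weight_border (N := N) (a := a) (by push_cast at ha; linarith)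
    rw [Measure.isAddLeftInvariant_eq_smul μ (Measure.map (border N) ρ), lintegral_smul_measure]
    refine ENNReal.mul_lt_top ENNReal.coe_lt_top ?_
    have hm : Measurable (border N) := (border N).continuous.measurable
    have hw : Measurable fun x => weight (N + 1) a (border N x) := (measurable_weight (N + 1) a).comp hm
    rw [lintegral_map (measurable_weight _ _) hm, lintegral_prod _ hw.aemeasurable]
    have hslice : ∀ A : Herm N, ∫⁻ x : (Fin N → ℂ) × ℝ, weight (N + 1) a (border N (A, x))
          ∂(volume.prod volume) =
        ∫⁻ v, ∫⁻ t, weight (N + 1) a (border N (A, v, t)) := fun A =>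
      lintegral_prod _ (hw.comp measurable_prodMk_left).aemeasurable
    simp_rw [hslice]
    calc _ ≤ ∫⁻ A, K * weight N (a - 1) A ∂ν := lintegral_mono hle
      _ = K * ∫⁻ A, weight N (a - 1) A ∂ν := lintegral_const_mul _ (measurable_weight _ _)
      _ < ⊤ := ENNReal.mul_lt_top hK.lt_top (ih (a - 1) (by push_cast at ha; linarith) ν)

end HuaPickrell

open HuaPickrell

/-- For `N ≥ 1` and `Re s > -1/2`, the Hua–Pickrell density
`H ↦ ∏_j (1+λ_j(H)^2)^(-Re s - N) exp(2 Im(s) arctan λ_j(H))` is integrable with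
respect to any additive Haar measure on the real vector space of `N×N` Hermitian matrices. -/
theorem huaPickrell_density_integrable (N : ℕ) (hN : 1 ≤ N) (s : ℂ) (hs : -1 / 2 < s.re)
    [MeasurableSpace (selfAdjoint (Matrix (Fin N) (Fin N) ℂ))]
    [BorelSpace (selfAdjoint (Matrix (Fin N) (Fin N) ℂ))]
    (μ : Measure (selfAdjoint (Matrix (Fin N) (Fin N) ℂ))) [μ.IsAddHaarMeasure] :
    Integrable
      (fun H : selfAdjoint (Matrix (Fin N) (Fin N) ℂ) =>
        ∏ j : Fin N,
          (1 + (hermitianEigenvalues H j) ^ 2) ^ (-s.re - (N : ℝ)) *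
            Real.exp (2 * s.im * Real.arctan (hermitianEigenvalues H j)))
      μ := by
  -- The density is the exponential of `∑ g(λ_j)` with `g` the logarithm of the weight.
  have hmeas : Measurable (fun H : Herm N =>
        ∏ j : Fin N,
          (1 + (hermitianEigenvalues H j) ^ 2) ^ (-s.re - (N : ℝ)) *
            Real.exp (2 * s.im * Real.arctan (hermitianEigenvalues H j))) := by
    have hg : Continuous fun x : ℝ => Real.log (1 + x ^ 2) * (-s.re - N) +
        2 * s.im * Real.arctan x := by
      refine Continuous.add (Continuous.mul (Continuous.log (by fun_prop) fun x => ?_)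
        continuous_const) (continuous_const.mul Real.continuous_arctan)
      positivity
    convert Real.measurable_exp.comp (measurable_sum_eigenvalues (N := N) hg) using 1
    funext H
    rw [Function.comp_apply, Real.exp_sum]
    refine Finset.prod_congr rfl fun j _ => ?_
    rw [Real.exp_add, Real.rpow_def_of_pos (by positivity)]
  have hw : Integrable (fun H : Herm N =>
      (‖(1 + Complex.I • (H : Matrix (Fin N) (Fin N) ℂ)).det‖ ^ 2) ^ (-(s.re + N))) μ := by
    refine ⟨((continuous_norm_sq_det N).measurable.pow_const _).aestronglyMeasurable, ?_⟩
    rw [hasFiniteIntegral_iff_ofReal (Filter.Eventually.of_forall fun H => by positivity)]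
    exact lintegral_weight_lt_top N _ (by linarith) μ
  refine (hw.const_mul (Real.exp (|2 * s.im| * (Real.pi / 2)) ^ N)).mono'
    hmeas.aestronglyMeasurable (Filter.Eventually.of_forall fun H => ?_)
  rw [Real.norm_of_nonneg (Finset.prod_nonneg fun j _ => by positivity), Finset.prod_mul_distrib,
    norm_sq_det, ← Real.finsetProd_rpow _ _ (fun j _ => by positivity), mul_comm,
    show -(s.re + N) = -s.re - N by ring]
  gcongr
  refine (Finset.prod_le_prod (g := fun _ => Real.exp (|2 * s.im| * (Real.pi / 2)))
    (fun j _ => by positivity) fun j _ => ?_).trans (by simp)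
  refine Real.exp_le_exp.2 ((le_abs_self _).trans ?_)
  rw [abs_mul]
  gcongr
  exact abs_le.2 ⟨(Real.arctan_mem_Ioo _).1.le, (Real.arctan_mem_Ioo _).2.le⟩
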